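/- For every positive integer k there exists a constant e ≥ 1, depending only on k, such that for every permutation pattern q of length k, every positive integer n, and every choice of positive multiplicities m_1, …, m_n with maximum M, the number of q-avoiding permutations of the multiset {1^{m_1}, 2^{m_2}, …, n^{m_n}} is at most e^(n·M). -/

import Mathlib

/-- A permutation `p` of length `n` contains the permutation `q` of length `k` as a pattern. -/
def PermContains {n k : ℕ} (p : Equiv.Perm (Fin n)) (q : Equiv.Perm (Fin k)) : Prop :=
  ∃ f : Fin k → Fin n, StrictMono f ∧ ∀ a b : Fin k, p (f a) < p (f b) ↔ q a < q b

/-- A word `w` over `{1,…,n}` contains the permutation pattern `q` of length `k`. -/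
def WordContains {l n k : ℕ} (w : Fin l → Fin n) (q : Equiv.Perm (Fin k)) : Prop :=
  ∃ f : Fin k → Fin l, StrictMono f ∧ ∀ a b : Fin k, w (f a) < w (f b) ↔ q a < q b

/-- `w` is a permutation of the regular multiset `[n]_m`: each letter occurs exactly `m` times. -/
def IsRegularWord {l n : ℕ} (m : ℕ) (w : Fin l → Fin n) : Prop :=
  ∀ j : Fin n, (Finset.univ.filter fun i => w i = j).card = m

/-- Ordered-subgraph containment for simple bipartite graphs given by their edge sets. -/
def GraphContains {n n' k k' : ℕ} (P : Finset (Fin n × Fin n')) (Q : Finset (Fin k × Fin k')) :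
    Prop :=
  ∃ (f : Fin k → Fin n) (f' : Fin k' → Fin n'),
    StrictMono f ∧ StrictMono f' ∧ ∀ v v', (v, v') ∈ Q → (f v, f' v') ∈ P

/-- The bipartite graph associated to a permutation `q`: edges `(i, q i)`. -/
def permGraph {k : ℕ} (q : Equiv.Perm (Fin k)) : Finset (Fin k × Fin k) :=
  Finset.univ.image fun i => (i, q i)

/-- The bipartite graph associated to a word `w`: edges `(i, w i)`. -/
def wordGraph {l n : ℕ} (w : Fin l → Fin n) : Finset (Fin l × Fin n) :=
  Finset.univ.image fun i => (i, w i)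

/-- Pattern containment for 0-1 matrices. -/
def MatContains {n n' k k' : ℕ} (P : Fin n → Fin n' → Bool) (Q : Fin k → Fin k' → Bool) : Prop :=
  ∃ (r : Fin k → Fin n) (c : Fin k' → Fin n'),
    StrictMono r ∧ StrictMono c ∧ ∀ i j, Q i j = true → P (r i) (c j) = true

/-- The permutation matrix of a permutation `q`: 1-entry at `(i, q i)`. -/
def permMatrix {k : ℕ} (q : Equiv.Perm (Fin k)) : Fin k → Fin k → Bool :=
  fun i j => decide (q i = j)

/-- The number of 1-entries of a 0-1 matrix. -/
def oneEntries {n n' : ℕ} (P : Fin n → Fin n' → Bool) : ℕ :=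
  (Finset.univ.filter fun ij : Fin n × Fin n' => P ij.1 ij.2 = true).card

/-- The contraction of a bipartite graph on `([n·m],[n])` to one on `([n],[n])`:
`(i,j)` is an edge iff some vertex `t` in the `i`-th block of `m` consecutive vertices
is joined to `j`. -/
def contraction {n m : ℕ} (G : Finset (Fin (n * m) × Fin n)) : Finset (Fin n × Fin n) :=
  Finset.univ.filter fun ij : Fin n × Fin n =>
    ∃ t : Fin (n * m), (t, ij.2) ∈ G ∧ m * (ij.1 : ℕ) ≤ (t : ℕ) ∧ (t : ℕ) < m * ((ij.1 : ℕ) + 1)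

/-- The 0-1 adjacency matrix of a bipartite graph. -/
def adjMatrix {n n' : ℕ} (G : Finset (Fin n × Fin n')) : Fin n → Fin n' → Bool :=
  fun i j => decide ((i, j) ∈ G)

/-- A word contains the multiset pattern `212`. -/
def Contains212 {l n : ℕ} (w : Fin l → Fin n) : Prop :=
  ∃ i₁ i₂ i₃ : Fin l, i₁ < i₂ ∧ i₂ < i₃ ∧ w i₁ = w i₃ ∧ w i₂ < w i₁

/-!
Replace a word `w` by the set of its cells `(i, w i)` in a square grid of side `s ^ t`, where
`s > k ^ 2` is fixed, and cut the grid into `s × s` blocks. A set of cells avoiding a permutation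
matrix contracts to the set of blocks it meets, which avoids it too.

(Marcus–Tardos) Call a block wide if it meets the set in at least `k` columns. If, in one vertical
strip of blocks, `k` blocks were occupied in the same `k` columns, they would contain every
permutation matrix of size `k`; hence each strip has boundedly many wide blocks, and by symmetry
each horizontal strip has boundedly many tall ones. All other blocks hold fewer than `k ^ 2` cells.
Since `k ^ 2 < s`, the recursion `f (s * n) ≤ k ^ 2 * f n + O(n)` for the maximal size `f` of an
avoiding set gives `f n = O(n)`.

(Klazar) A set with contraction `B` is a subset of the `s ^ 2 * #B` cells in the blocks of `B`, so
the number `g` of avoiding sets satisfies `g (s * n) ≤ 2 ^ O(n) * g n`, whence `g n = 2 ^ O(n)`.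
-/

open Finset

/-- Pattern containment for finite sets of cells: `A` contains the permutation matrix of `q`. -/
def ContainsPerm {k : ℕ} (A : Finset (ℕ × ℕ)) (q : Equiv.Perm (Fin k)) : Prop :=
  ∃ r c : Fin k → ℕ, StrictMono r ∧ StrictMono c ∧ ∀ i, (r i, c (q i)) ∈ A

/-- The square grid of side `N`, with coordinates starting at `0`. -/
def gridSquare (N : ℕ) : Finset (ℕ × ℕ) :=
  range N ×ˢ range N

/-- The position, in the tiling of the plane by `s × s` blocks, of the block containing `p`. -/
def blockIndex (s : ℕ) (p : ℕ × ℕ) : ℕ × ℕ :=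
  (p.1 / s, p.2 / s)

/-- All cells of the `s × s` block at position `b`. -/
def gridBlock (s : ℕ) (b : ℕ × ℕ) : Finset (ℕ × ℕ) :=
  Ico (s * b.1) (s * b.1 + s) ×ˢ Ico (s * b.2) (s * b.2 + s)

/-- The block contraction of a set of cells: the positions of the `s × s` blocks that it meets. -/
def blockContraction (s : ℕ) (A : Finset (ℕ × ℕ)) : Finset (ℕ × ℕ) :=
  A.image (blockIndex s)

/-- The cells of `A` lying in the `s × s` block at position `b`. -/
def blockCells (s : ℕ) (A : Finset (ℕ × ℕ)) (b : ℕ × ℕ) : Finset (ℕ × ℕ) :=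
  {p ∈ A | blockIndex s p = b}

/-- The rows (first coordinates, as in matrices) in which `A` meets the block at position `b`. -/
def blockRows (s : ℕ) (A : Finset (ℕ × ℕ)) (b : ℕ × ℕ) : Finset ℕ :=
  (blockCells s A b).image Prod.fst

/-- The columns (second coordinates) in which `A` meets the block at position `b`. -/
def blockColumns (s : ℕ) (A : Finset (ℕ × ℕ)) (b : ℕ × ℕ) : Finset ℕ :=
  (blockCells s A b).image Prod.snd

/-- The wide blocks of Marcus and Tardos: those meeting `A` in at least `k` columns. -/
def wideBlocks (k s : ℕ) (A : Finset (ℕ × ℕ)) : Finset (ℕ × ℕ) :=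
  {b ∈ blockContraction s A | k ≤ #(blockColumns s A b)}

/-- The tall blocks of Marcus and Tardos: those meeting `A` in at least `k` rows. -/
def tallBlocks (k s : ℕ) (A : Finset (ℕ × ℕ)) : Finset (ℕ × ℕ) :=
  {b ∈ blockContraction s A | k ≤ #(blockRows s A b)}

section Blocks

variable {s : ℕ}

theorem mem_gridBlock_blockIndex (hs : 0 < s) (p : ℕ × ℕ) :
    p ∈ gridBlock s (blockIndex s p) := by
  have mem_Ico_div (a : ℕ) : a ∈ Ico (s * (a / s)) (s * (a / s) + s) :=
    mem_Ico.2 ⟨Nat.mul_div_le a s, Nat.lt_mul_div_succ a hs⟩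
  exact mem_product.2 ⟨mem_Ico_div p.1, mem_Ico_div p.2⟩

theorem card_gridBlock (s : ℕ) (b : ℕ × ℕ) : #(gridBlock s b) = s ^ 2 := by
  simp [gridBlock, sq]

theorem blockCells_subset_gridBlock (hs : 0 < s) (A : Finset (ℕ × ℕ)) (b : ℕ × ℕ) :
    blockCells s A b ⊆ gridBlock s b := by
  intro p hp
  obtain ⟨-, rfl⟩ := mem_filter.1 hp
  exact mem_gridBlock_blockIndex hs p

theorem card_blockCells_le_sq (hs : 0 < s) (A : Finset (ℕ × ℕ)) (b : ℕ × ℕ) :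
    #(blockCells s A b) ≤ s ^ 2 :=
  card_gridBlock s b ▸ card_le_card (blockCells_subset_gridBlock hs A b)

theorem card_blockCells_le_card_rows_mul_card_columns (s : ℕ) (A : Finset (ℕ × ℕ)) (b : ℕ × ℕ) :
    #(blockCells s A b) ≤ #(blockRows s A b) * #(blockColumns s A b) := by
  rw [← card_product]
  exact card_le_card subset_product

theorem blockColumns_subset_Ico (hs : 0 < s) (A : Finset (ℕ × ℕ)) (b : ℕ × ℕ) :
    blockColumns s A b ⊆ Ico (s * b.2) (s * b.2 + s) :=
  image_subset_iff.2 fun _ hp ↦ (mem_product.1 (blockCells_subset_gridBlock hs A b hp)).2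

theorem exists_mem_of_mem_blockColumns {A : Finset (ℕ × ℕ)} {b : ℕ × ℕ} {y : ℕ}
    (hy : y ∈ blockColumns s A b) : ∃ x, (x, y) ∈ A ∧ x / s = b.1 := by
  obtain ⟨p, hp, rfl⟩ := mem_image.1 hy
  obtain ⟨hpA, rfl⟩ := mem_filter.1 hp
  exact ⟨p.1, hpA, rfl⟩

theorem blockContraction_subset_gridSquare {n : ℕ} {A : Finset (ℕ × ℕ)}
    (hA : A ⊆ gridSquare (s * n)) : blockContraction s A ⊆ gridSquare n := by
  refine image_subset_iff.2 fun p hp ↦ ?_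
  obtain ⟨h₁, h₂⟩ := mem_product.1 (hA hp)
  exact mem_product.2 ⟨mem_range.2 (Nat.div_lt_of_lt_mul (mem_range.1 h₁)),
    mem_range.2 (Nat.div_lt_of_lt_mul (mem_range.1 h₂))⟩

theorem subset_biUnion_gridBlock_blockContraction (hs : 0 < s) (A : Finset (ℕ × ℕ)) :
    A ⊆ (blockContraction s A).biUnion (gridBlock s) := fun p hp ↦
  mem_biUnion.2 ⟨blockIndex s p, mem_image_of_mem _ hp, mem_gridBlock_blockIndex hs p⟩

theorem image_swap_subset_gridSquare {N : ℕ} {A : Finset (ℕ × ℕ)} (hA : A ⊆ gridSquare N) :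
    A.image Prod.swap ⊆ gridSquare N :=
  image_subset_iff.2 fun _ hp ↦ mem_product.2 (mem_product.1 (hA hp)).symm

theorem blockContraction_image_swap (s : ℕ) (A : Finset (ℕ × ℕ)) :
    blockContraction s (A.image Prod.swap) = (blockContraction s A).image Prod.swap := by
  simp only [blockContraction, image_image]
  rfl

theorem blockColumns_image_swap (s : ℕ) (A : Finset (ℕ × ℕ)) (b : ℕ × ℕ) :
    blockColumns s (A.image Prod.swap) b.swap = blockRows s A b := by
  have blockIndex_swap (p : ℕ × ℕ) : blockIndex s p.swap = b.swap ↔ blockIndex s p = b :=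
    Prod.swap_injective.eq_iff (a := blockIndex s p)
  simp only [blockColumns, blockRows, blockCells, filter_image, image_image, blockIndex_swap]
  rfl

theorem card_wideBlocks_image_swap (k s : ℕ) (A : Finset (ℕ × ℕ)) :
    #(wideBlocks k s (A.image Prod.swap)) = #(tallBlocks k s A) := by
  rw [wideBlocks, blockContraction_image_swap, filter_image,
    card_image_of_injective _ Prod.swap_injective]
  simp only [blockColumns_image_swap, tallBlocks]

theorem card_le_card_blockContraction_add_wide_add_tall (hs : 0 < s) (k : ℕ)
    (A : Finset (ℕ × ℕ)) :
    #A ≤ k ^ 2 * #(blockContraction s A) +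
      s ^ 2 * (#(wideBlocks k s A) + #(tallBlocks k s A)) := by
  have card_blockCells_le (b : ℕ × ℕ) : #(blockCells s A b) ≤ k ^ 2 +
      ((if k ≤ #(blockColumns s A b) then s ^ 2 else 0) +
        if k ≤ #(blockRows s A b) then s ^ 2 else 0) := by
    by_cases hb : k ≤ #(blockColumns s A b) ∨ k ≤ #(blockRows s A b)
    · have := card_blockCells_le_sq hs A b
      rcases hb with hb | hb <;> rw [if_pos hb] <;> omega
    · obtain ⟨hcol, hrow⟩ := not_or.1 hb
      calc #(blockCells s A b)
          ≤ #(blockRows s A b) * #(blockColumns s A b) :=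
            card_blockCells_le_card_rows_mul_card_columns s A b
        _ ≤ k * k := Nat.mul_le_mul (not_le.1 hrow).le (not_le.1 hcol).le
        _ ≤ _ := by rw [sq]; exact Nat.le_add_right _ _
  calc #A = ∑ b ∈ blockContraction s A, #(blockCells s A b) := card_eq_sum_card_image _ A
    _ ≤ ∑ b ∈ blockContraction s A, (k ^ 2 +
          ((if k ≤ #(blockColumns s A b) then s ^ 2 else 0) +
            if k ≤ #(blockRows s A b) then s ^ 2 else 0)) :=
        sum_le_sum fun b _ ↦ card_blockCells_le b
    _ = k ^ 2 * #(blockContraction s A) +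
          s ^ 2 * (#(wideBlocks k s A) + #(tallBlocks k s A)) := by
        simp only [sum_add_distrib, ← sum_filter, sum_const, smul_eq_mul, wideBlocks, tallBlocks]
        ring

end Blocks

section MarcusTardos

variable {k s n : ℕ} {q : Equiv.Perm (Fin k)} {A : Finset (ℕ × ℕ)}

theorem ContainsPerm.of_blockContraction (h : ContainsPerm (blockContraction s A) q) :
    ContainsPerm A q := by
  obtain ⟨r, c, hr, hc, hA⟩ := h
  choose p hpA hp using fun i ↦ mem_image.1 (hA i)
  have fst_div (i : Fin k) : (p i).1 / s = r i := congrArg Prod.fst (hp i)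
  have snd_div (j : Fin k) : (p (q.symm j)).2 / s = c j := by
    simpa [blockIndex] using congrArg Prod.snd (hp (q.symm j))
  refine ⟨fun i ↦ (p i).1, fun j ↦ (p (q.symm j)).2, fun i j hij ↦ ?_, fun i j hij ↦ ?_,
    fun i ↦ by simpa using hpA i⟩
  · exact Nat.lt_of_div_lt_div (c := s) (by simpa only [fst_div] using hr hij)
  · exact Nat.lt_of_div_lt_div (c := s) (by simpa only [snd_div] using hc hij)

theorem containsPerm_image_swap_symm :
    ContainsPerm (A.image Prod.swap) q.symm ↔ ContainsPerm A q := by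
  constructor
  · rintro ⟨r, c, hr, hc, h⟩
    exact ⟨c, r, hc, hr, fun i ↦ by simpa using h (q i)⟩
  · rintro ⟨r, c, hr, hc, h⟩
    exact ⟨c, r, hc, hr, fun j ↦ by simpa using h (q.symm j)⟩

theorem containsPerm_of_common_columns {R U : Finset ℕ} (hR : k ≤ #R) (hU : k ≤ #U)
    (h : ∀ i ∈ R, ∀ y ∈ U, ∃ x, (x, y) ∈ A ∧ x / s = i) : ContainsPerm A q := by
  choose x hxA hx using fun i ↦ h _ (R.orderEmbOfCardLe_mem hR i) _
    (U.orderEmbOfCardLe_mem hU (q i))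
  refine ⟨x, U.orderEmbOfCardLe hU, fun i j hij ↦ ?_, (U.orderEmbOfCardLe hU).strictMono, hxA⟩
  apply Nat.lt_of_div_lt_div (c := s)
  rw [hx, hx]
  exact (R.orderEmbOfCardLe hR).strictMono hij

theorem card_filter_subset_blockColumns_lt (hav : ¬ ContainsPerm A q) (R : Finset ℕ) (j : ℕ)
    {U : Finset ℕ} (hU : k ≤ #U) : #{i ∈ R | U ⊆ blockColumns s A (i, j)} < k := by
  by_contra! hR
  exact hav <| containsPerm_of_common_columns hR hU fun i hi _ hy ↦
    exists_mem_of_mem_blockColumns ((mem_filter.1 hi).2 hy)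

theorem card_wideBlocks_le (hs : 0 < s) (hA : A ⊆ gridSquare (s * n))
    (hav : ¬ ContainsPerm A q) : #(wideBlocks k s A) ≤ n * (s.choose k * k) := by
  let commonBlocks (j : ℕ) (U : Finset ℕ) : Finset (ℕ × ℕ) :=
    {i ∈ range n | U ⊆ blockColumns s A (i, j)} ×ˢ {j}
  let stripBlocks (j : ℕ) : Finset (ℕ × ℕ) :=
    (powersetCard k (Ico (s * j) (s * j + s))).biUnion (commonBlocks j)
  have wideBlocks_subset : wideBlocks k s A ⊆ (range n).biUnion stripBlocks := by
    rintro ⟨i, j⟩ hb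
    obtain ⟨hbA, hwide⟩ := mem_filter.1 hb
    obtain ⟨hi, hj⟩ := mem_product.1 (blockContraction_subset_gridSquare hA hbA)
    obtain ⟨U, hUsub, hUcard⟩ := exists_subset_card_eq hwide
    exact mem_biUnion.2 ⟨j, hj, mem_biUnion.2
      ⟨U, mem_powersetCard.2 ⟨hUsub.trans (blockColumns_subset_Ico hs A _), hUcard⟩,
        mem_product.2 ⟨mem_filter.2 ⟨hi, hUsub⟩, mem_singleton_self j⟩⟩⟩
  have card_stripBlocks_le (j : ℕ) : #(stripBlocks j) ≤ s.choose k * k := by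
    refine (card_biUnion_le_card_mul _ _ k fun U hU ↦ ?_).trans_eq (by simp)
    simpa [commonBlocks] using
      (card_filter_subset_blockColumns_lt hav (range n) j (mem_powersetCard.1 hU).2.ge).le
  calc #(wideBlocks k s A) ≤ #((range n).biUnion stripBlocks) := card_le_card wideBlocks_subset
    _ ≤ #(range n) * (s.choose k * k) :=
        card_biUnion_le_card_mul _ _ _ fun j _ ↦ card_stripBlocks_le j
    _ = n * (s.choose k * k) := by rw [card_range]

theorem card_tallBlocks_le (hs : 0 < s) (hA : A ⊆ gridSquare (s * n))
    (hav : ¬ ContainsPerm A q) : #(tallBlocks k s A) ≤ n * (s.choose k * k) := by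
  rw [← card_wideBlocks_image_swap]
  exact card_wideBlocks_le hs (image_swap_subset_gridSquare hA)
    (containsPerm_image_swap_symm.not.2 hav)

theorem card_le_card_blockContraction_add_of_not_containsPerm (hs : 0 < s)
    (hA : A ⊆ gridSquare (s * n)) (hav : ¬ ContainsPerm A q) :
    #A ≤ k ^ 2 * #(blockContraction s A) + 2 * s ^ 2 * (s.choose k * k) * n :=
  calc #A ≤ k ^ 2 * #(blockContraction s A) +
        s ^ 2 * (#(wideBlocks k s A) + #(tallBlocks k s A)) :=
        card_le_card_blockContraction_add_wide_add_tall hs k A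
    _ ≤ k ^ 2 * #(blockContraction s A) +
        s ^ 2 * (n * (s.choose k * k) + n * (s.choose k * k)) := by
        gcongr
        exacts [card_wideBlocks_le hs hA hav, card_tallBlocks_le hs hA hav]
    _ = _ := by ring

/-- The constant of the Marcus–Tardos bound obtained from blocks of side `s`. The summand `1`
accounts for the `1 × 1` grid. -/
def marcusTardosConst (k s : ℕ) : ℕ :=
  2 * s ^ 2 * (s.choose k * k) + 1

theorem card_le_marcusTardosConst_mul (hs : k ^ 2 < s) (t : ℕ) {A : Finset (ℕ × ℕ)}
    (hA : A ⊆ gridSquare (s ^ t)) (hav : ¬ ContainsPerm A q) :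
    #A ≤ marcusTardosConst k s * s ^ t := by
  induction t generalizing A with
  | zero =>
    calc #A ≤ #(gridSquare (s ^ 0)) := card_le_card hA
      _ = 1 := by simp [gridSquare]
      _ ≤ marcusTardosConst k s * s ^ 0 := by simp [marcusTardosConst]
  | succ t ih =>
    rw [pow_succ'] at hA
    have hcontr : #(blockContraction s A) ≤ marcusTardosConst k s * s ^ t :=
      ih (blockContraction_subset_gridSquare hA) (mt ContainsPerm.of_blockContraction hav)
    calc #A ≤ k ^ 2 * #(blockContraction s A) + 2 * s ^ 2 * (s.choose k * k) * s ^ t :=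
          card_le_card_blockContraction_add_of_not_containsPerm (Nat.zero_lt_of_lt hs) hA hav
      _ ≤ k ^ 2 * (marcusTardosConst k s * s ^ t) + marcusTardosConst k s * s ^ t := by
          gcongr
          exact Nat.le_succ _
      _ = (k ^ 2 + 1) * (marcusTardosConst k s * s ^ t) := by ring
      _ ≤ s * (marcusTardosConst k s * s ^ t) := Nat.mul_le_mul_right _ hs
      _ = marcusTardosConst k s * s ^ (t + 1) := by ring

end MarcusTardos

section Klazar

variable {s : ℕ}

theorem card_filter_blockContraction_eq_le (hs : 0 < s) (F : Finset (Finset (ℕ × ℕ)))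
    (B : Finset (ℕ × ℕ)) : #{A ∈ F | blockContraction s A = B} ≤ 2 ^ (s ^ 2 * #B) := by
  have subset_powerset :
      {A ∈ F | blockContraction s A = B} ⊆ (B.biUnion (gridBlock s)).powerset := by
    intro A hA
    obtain ⟨-, rfl⟩ := mem_filter.1 hA
    exact mem_powerset.2 (subset_biUnion_gridBlock_blockContraction hs A)
  have card_biUnion_le : #(B.biUnion (gridBlock s)) ≤ #B * s ^ 2 :=
    card_biUnion_le_card_mul _ _ _ fun b _ ↦ (card_gridBlock s b).le
  calc #{A ∈ F | blockContraction s A = B} ≤ 2 ^ #(B.biUnion (gridBlock s)) :=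
        (card_le_card subset_powerset).trans_eq (card_powerset _)
    _ ≤ 2 ^ (s ^ 2 * #B) := Nat.pow_le_pow_right two_pos (by rwa [mul_comm])

theorem card_filter_powerset_gridSquare_pow_le {P : Finset (ℕ × ℕ) → Prop} [DecidablePred P]
    {C : ℕ} (hs : 2 ≤ s) (hP : ∀ A, P A → P (blockContraction s A))
    (hC : ∀ t, ∀ A ⊆ gridSquare (s ^ t), P A → #A ≤ C * s ^ t) (t : ℕ) :
    #{A ∈ (gridSquare (s ^ t)).powerset | P A} ≤ 2 ^ ((s ^ 2 * C + 1) * s ^ t) := by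
  induction t with
  | zero =>
    calc #{A ∈ (gridSquare (s ^ 0)).powerset | P A} ≤ #(gridSquare (s ^ 0)).powerset :=
          card_filter_le _ _
      _ = 2 ^ 1 := by simp [gridSquare]
      _ ≤ 2 ^ ((s ^ 2 * C + 1) * s ^ 0) := Nat.pow_le_pow_right two_pos (by simp)
  | succ t ih =>
    set D := s ^ 2 * C + 1
    have contraction_mem : ∀ A ∈ {A ∈ (gridSquare (s ^ (t + 1))).powerset | P A},
        blockContraction s A ∈ {A ∈ (gridSquare (s ^ t)).powerset | P A} := by
      simp only [mem_filter, mem_powerset, pow_succ']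
      exact fun A hA ↦ ⟨blockContraction_subset_gridSquare hA.1, hP A hA.2⟩
    have card_fiber_le : ∀ B ∈ {A ∈ (gridSquare (s ^ t)).powerset | P A},
        #{A ∈ {A ∈ (gridSquare (s ^ (t + 1))).powerset | P A} | blockContraction s A = B} ≤
          2 ^ (D * s ^ t) := by
      intro B hB
      obtain ⟨hBsub, hBP⟩ := mem_filter.1 hB
      refine (card_filter_blockContraction_eq_le (by omega) _ B).trans
        (Nat.pow_le_pow_right two_pos ?_)
      calc s ^ 2 * #B ≤ s ^ 2 * (C * s ^ t) :=
            Nat.mul_le_mul_left _ (hC t B (mem_powerset.1 hBsub) hBP)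
        _ = s ^ 2 * C * s ^ t := (mul_assoc _ _ _).symm
        _ ≤ D * s ^ t := Nat.mul_le_mul_right _ (Nat.le_succ _)
    calc #{A ∈ (gridSquare (s ^ (t + 1))).powerset | P A}
        ≤ 2 ^ (D * s ^ t) * #{A ∈ (gridSquare (s ^ t)).powerset | P A} :=
          card_le_mul_card_image_of_maps_to contraction_mem _ card_fiber_le
      _ ≤ 2 ^ (D * s ^ t) * 2 ^ (D * s ^ t) := Nat.mul_le_mul_left _ ih
      _ = 2 ^ (2 * (D * s ^ t)) := by ring
      _ ≤ 2 ^ (s * (D * s ^ t)) := Nat.pow_le_pow_right two_pos (Nat.mul_le_mul_right _ hs)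
      _ = 2 ^ (D * s ^ (t + 1)) := by ring_nf

theorem exists_le_pow_le_mul (hs : 1 < s) {N : ℕ} (hN : N ≠ 0) :
    ∃ t, N ≤ s ^ t ∧ s ^ t ≤ s * N := by
  refine ⟨Nat.log s N + 1, (Nat.lt_pow_succ_log_self hs N).le, ?_⟩
  rw [pow_succ']
  exact Nat.mul_le_mul_left s (Nat.pow_log_le_self s hN)

theorem card_filter_powerset_gridSquare_le {P : Finset (ℕ × ℕ) → Prop} [DecidablePred P]
    {C : ℕ} (hs : 2 ≤ s) (hP : ∀ A, P A → P (blockContraction s A))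
    (hC : ∀ t, ∀ A ⊆ gridSquare (s ^ t), P A → #A ≤ C * s ^ t) (N : ℕ) :
    #{A ∈ (gridSquare N).powerset | P A} ≤ (2 ^ ((s ^ 2 * C + 1) * s)) ^ N := by
  obtain rfl | hN := eq_or_ne N 0
  · exact (card_filter_le _ _).trans_eq (by simp [gridSquare])
  obtain ⟨t, hNt, hts⟩ := exists_le_pow_le_mul hs hN
  have gridSquare_subset : gridSquare N ⊆ gridSquare (s ^ t) :=
    product_subset_product (range_mono hNt) (range_mono hNt)
  calc #{A ∈ (gridSquare N).powerset | P A} ≤ #{A ∈ (gridSquare (s ^ t)).powerset | P A} :=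
        card_le_card (filter_subset_filter _ (powerset_mono.2 gridSquare_subset))
    _ ≤ 2 ^ ((s ^ 2 * C + 1) * s ^ t) := card_filter_powerset_gridSquare_pow_le hs hP hC t
    _ ≤ 2 ^ ((s ^ 2 * C + 1) * (s * N)) :=
        Nat.pow_le_pow_right two_pos (Nat.mul_le_mul_left _ hts)
    _ = (2 ^ ((s ^ 2 * C + 1) * s)) ^ N := by rw [← mul_assoc, pow_mul]

open Classical in
theorem card_filter_not_containsPerm_le {k : ℕ} (hs : 2 ≤ s) (hks : k ^ 2 < s)
    (q : Equiv.Perm (Fin k)) (N : ℕ) :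
    #{A ∈ (gridSquare N).powerset | ¬ ContainsPerm A q} ≤
      (2 ^ ((s ^ 2 * marcusTardosConst k s + 1) * s)) ^ N :=
  card_filter_powerset_gridSquare_le hs (fun _ ↦ mt ContainsPerm.of_blockContraction)
    (fun t _ ↦ card_le_marcusTardosConst_mul hks t) N

end Klazar

section Words

variable {k l n : ℕ}

/-- The cells `(i, w i)` of a word: `wordGraph w` as a subset of the infinite grid. -/
def wordCells (w : Fin l → Fin n) : Finset (ℕ × ℕ) :=
  univ.image fun i : Fin l ↦ ((i : ℕ), (w i : ℕ))

theorem mem_wordCells {w : Fin l → Fin n} {p : ℕ × ℕ} :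
    p ∈ wordCells w ↔ ∃ i : Fin l, (i : ℕ) = p.1 ∧ (w i : ℕ) = p.2 := by
  simp [wordCells, Prod.ext_iff]

theorem wordCells_injective : Function.Injective (wordCells : (Fin l → Fin n) → _) := by
  intro w w' h
  funext i
  have hi : ((i : ℕ), (w i : ℕ)) ∈ wordCells w' := h ▸ mem_wordCells.2 ⟨i, rfl, rfl⟩
  obtain ⟨j, hj, hw⟩ := mem_wordCells.1 hi
  obtain rfl : j = i := Fin.ext hj
  exact Fin.ext hw.symm

theorem wordCells_subset_gridSquare (w : Fin l → Fin n) :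
    wordCells w ⊆ gridSquare (max l n) :=
  image_subset_iff.2 fun i _ ↦ mem_product.2
    ⟨mem_range.2 (lt_max_of_lt_left i.isLt), mem_range.2 (lt_max_of_lt_right (w i).isLt)⟩

theorem wordContains_of_containsPerm_wordCells {w : Fin l → Fin n} {q : Equiv.Perm (Fin k)}
    (h : ContainsPerm (wordCells w) q) : WordContains w q := by
  obtain ⟨r, c, hr, hc, hrc⟩ := h
  choose f hfr hfc using fun a ↦ mem_wordCells.1 (hrc a)
  refine ⟨f, fun a b hab ↦ ?_, fun a b ↦ ?_⟩
  · simpa only [Fin.lt_def, hfr] using hr hab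
  · simpa only [Fin.lt_def, hfc] using hc.lt_iff_lt

open Classical in
theorem card_not_wordContains_le_card_not_containsPerm (q : Equiv.Perm (Fin k)) (l n : ℕ) :
    Nat.card {w : Fin l → Fin n // ¬ WordContains w q} ≤
      #{A ∈ (gridSquare (max l n)).powerset | ¬ ContainsPerm A q} := by
  rw [← Nat.card_eq_finsetCard]
  refine Nat.card_le_card_of_injective (fun w ↦ ⟨wordCells w.1, mem_filter.2
    ⟨mem_powerset.2 (wordCells_subset_gridSquare w.1),
      mt wordContains_of_containsPerm_wordCells w.2⟩⟩) fun w w' h ↦ ?_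
  exact Subtype.ext (wordCells_injective (congrArg Subtype.val h))

theorem max_sum_card_le_card_mul_sup {ι : Type*} {t : Finset ι} {m : ι → ℕ}
    (hm : ∀ i ∈ t, 0 < m i) : max (∑ i ∈ t, m i) #t ≤ #t * t.sup m := by
  have card_le_sum : #t ≤ ∑ i ∈ t, m i := by
    simpa using card_nsmul_le_sum t m 1 hm
  rw [max_eq_left card_le_sum]
  exact sum_le_card_nsmul t m (t.sup m) fun i hi ↦ le_sup hi

end Words

theorem multiset_stanley_wilf_general_general (k : ℕ) :
    ∃ e : ℕ, 1 ≤ e ∧ ∀ (q : Equiv.Perm (Fin k)) (l n : ℕ),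
      Nat.card {w : Fin l → Fin n // ¬ WordContains w q} ≤ e ^ max l n := by
  obtain ⟨s, hs, hks⟩ : ∃ s, 2 ≤ s ∧ k ^ 2 < s := ⟨k ^ 2 + 2, by omega, by omega⟩
  exact ⟨2 ^ ((s ^ 2 * marcusTardosConst k s + 1) * s), Nat.one_le_two_pow, fun q l n ↦
    (card_not_wordContains_le_card_not_containsPerm q l n).trans
      (card_filter_not_containsPerm_le hs hks q _)⟩

/-- Stanley–Wilf for permutations of arbitrary multisets. -/
theorem multiset_stanley_wilf_general (k : ℕ) (hk : 0 < k) :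
    ∃ e : ℕ, 1 ≤ e ∧ ∀ (q : Equiv.Perm (Fin k)) (n : ℕ), 0 < n →
      ∀ m : Fin n → ℕ, (∀ i, 0 < m i) →
        Nat.card {w : Fin (∑ i, m i) → Fin n //
            (∀ j : Fin n, (Finset.univ.filter fun i => w i = j).card = m j) ∧
              ¬ WordContains w q} ≤
          e ^ (n * Finset.univ.sup m) := by
  obtain ⟨e, he, hcard⟩ := multiset_stanley_wilf_general_general k
  exact ⟨e, he, fun q n _ m hm ↦
    (Nat.card_le_card_of_injective _ (Subtype.impEmbedding _ _ fun _ h ↦ h.2).injective).trans <|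
      (hcard q _ n).trans (Nat.pow_le_pow_right he
        (by simpa using max_sum_card_le_card_mul_sup (t := univ) fun i _ ↦ hm i))⟩
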